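/- For every point x of the diagram D, the vector w_L = xp + Σ_{l incident to x} l (the sum running over the three lines incident to x) is independent of the choice of the point x; moreover ⟨w_L, w_L⟩ = 2. -/

import Mathlib

/- Formalization over the ring ℋ of Hurwitz integers inside the real quaternions. -/

noncomputable section
open Quaternion Finset

/-- The real quaternions ℍ. -/
abbrev Quat := Quaternion ℝ

/-- The quaternion `i`. -/
def qi : Quat := ⟨0, 1, 0, 0⟩
/-- The quaternion `j`. -/
def qj : Quat := ⟨0, 0, 1, 0⟩
/-- The quaternion `k`. -/
def qk : Quat := ⟨0, 0, 0, 1⟩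
/-- `p = 1 - i`. -/
def qp : Quat := 1 - qi

/-- A quaternion is a Hurwitz integer if it is `(a+bi+cj+dk)/2` with
`a,b,c,d` integers which are all congruent mod `2`. -/
def IsHurwitz (q : Quat) : Prop :=
  ∃ a b c d : ℤ, a % 2 = b % 2 ∧ b % 2 = c % 2 ∧ c % 2 = d % 2 ∧
    q = ⟨(a : ℝ) / 2, (b : ℝ) / 2, (c : ℝ) / 2, (d : ℝ) / 2⟩

/-- A unit of the ring ℋ of Hurwitz integers. -/
def IsUnitH (q : Quat) : Prop :=
  IsHurwitz q ∧ ∃ r : Quat, IsHurwitz r ∧ q * r = 1 ∧ r * q = 1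

/-- Membership in the (two-sided) ideal `pℋ`. -/
def InPH (q : Quat) : Prop := ∃ h : Quat, IsHurwitz h ∧ q = qp * h

/-- The ambient space of the lattice `L = 3E₈ ⊕ H`: three pairs (the `E₈` summands)
together with the two coordinates of the hyperbolic cell `H`. -/
abbrev V3 : Type := (Fin 3 → Quat × Quat) × Quat × Quat

/-- The ℋ-valued form on `3E₈ ⊕ H`:  negative definite standard form on each `E₈`
summand and the hyperbolic form `⟨(x₁,x₂),(y₁,y₂)⟩ = x̄₁ p̄ y₂ + x̄₂ p y₁` on `H`. -/
def ip3 (x y : V3) : Quat :=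
  (∑ s : Fin 3, (-(star (x.1 s).1 * (y.1 s).1) - star (x.1 s).2 * (y.1 s).2))
    + star x.2.1 * star qp * y.2.2 + star x.2.2 * qp * y.2.1

/-- Membership in the `E₈` lattice: both coordinates Hurwitz and congruent mod `pℋ`. -/
def memE8 (q : Quat × Quat) : Prop := IsHurwitz q.1 ∧ IsHurwitz q.2 ∧ InPH (q.1 - q.2)

/-- Membership in the lattice `L = 3E₈ ⊕ H`. -/
def memL3 (v : V3) : Prop := (∀ s, memE8 (v.1 s)) ∧ IsHurwitz v.2.1 ∧ IsHurwitz v.2.2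

/-- Right scalar multiplication on the ambient space of `3E₈ ⊕ H`. -/
def rmul3 (v : V3) (q : Quat) : V3 :=
  (fun s => ((v.1 s).1 * q, (v.1 s).2 * q), v.2.1 * q, v.2.2 * q)

/-- The `μ`-reflection in a root `r` : `v ↦ v − r(1−μ)⟨r,v⟩/|r|²`. -/
def refl3 (r : V3) (μ : Quat) (v : V3) : V3 := v - rmul3 r ((1 - μ) * ip3 r v / ip3 r r)

/-- The root `a` of the diagram `D`. -/
def rootA : V3 := (fun _ => (0, 0), 1, -1)
/-- The roots `c_s` of the diagram `D`. -/
def rootC (s : Fin 3) : V3 := (fun t => if t = s then ((1 : Quat), (-1 : Quat)) else 0, 0, 0)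
/-- The roots `e_s` of the diagram `D` (with `(1,1)` in the two other `E₈` slots). -/
def rootE (s : Fin 3) : V3 := (fun t => if t = s then (0 : Quat × Quat) else (1, 1), -qi, -1)
/-- The root `f` of the diagram `D`. -/
def rootF : V3 := (fun _ => (0, qp), -(qi * qp), -qp)
/-- The roots `b_s` of the diagram `D`. -/
def rootB (s : Fin 3) : V3 := (fun t => if t = s then ((0 : Quat), qp) else 0, -1, 0)
/-- The roots `d_s` of the diagram `D`. -/
def rootD (s : Fin 3) : V3 := (fun t => if t = s then (-qp, (0 : Quat)) else 0, 0, 0)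

/-- The set of roots of `L`. -/
def Roots3 : Set V3 := {r | memL3 r ∧ ip3 r r = -2}

/-- The reflection group `R(L)` of `L = 3E₈ ⊕ H`, as the subgroup of permutations of the
ambient space generated by the `μ`-reflections in all roots of `L` (for all units `μ ≠ 1`). -/
def RL3 : Subgroup (Equiv.Perm V3) :=
  Subgroup.closure {g | ∃ r μ, r ∈ Roots3 ∧ IsUnitH μ ∧ μ ≠ 1 ∧ ∀ v, g v = refl3 r μ v}

/-- The seven `points` of the diagram `D`. -/
def Pt : Fin 7 → V3 := ![rootA, rootC 0, rootC 1, rootC 2, rootE 0, rootE 1, rootE 2]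
/-- The seven `lines` of the diagram `D`. -/
def Ln : Fin 7 → V3 := ![rootF, rootB 0, rootB 1, rootB 2, rootD 0, rootD 1, rootD 2]

open Classical in
/-- `w_P = l p̄ + Σ_{x incident to l} x`, computed from the line `Ln s`. -/
def wPof (s : Fin 7) : V3 :=
  rmul3 (Ln s) (star qp) + ∑ t : Fin 7, if ip3 (Pt t) (Ln s) = qp then Pt t else 0

open Classical in
/-- `w_L = x p + Σ_{l incident to x} l`, computed from the point `Pt t`. -/
def wLof (t : Fin 7) : V3 :=
  rmul3 (Pt t) qp + ∑ s : Fin 7, if ip3 (Pt t) (Ln s) = qp then Ln s else 0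

/-!
The points of `D` are pairwise orthogonal of norm `-2`, so are the lines, and incidence is that of
the Fano plane. Hence, for every point `x`, the vector `w = x p + ∑ l` is orthogonal to each line
`m`: the two terms `⟨m, x⟩ p = p̄ p = 2` and `⟨m, m⟩ = -2` occur together or not at all. Moreover
`⟨y, w⟩ = p` for each point `y`: for `y = x` this is `-2 p + 3 p`, and otherwise it comes from the
single line joining `x` and `y`. These products do not involve `x`, and the roots of `D` separate
vectors, so `w` does not depend on `x`. Finally `⟨w, w⟩ = ⟨w, x⟩ p + ∑ ⟨w, l⟩ = p̄ p = 2`.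
-/

section QuaternionArithmetic

lemma qi_mul_qi : qi * qi = -1 := by
  rw [← sq, Quaternion.sq_eq_neg_normSq.mpr rfl, Quaternion.normSq_def']
  simp [qi]

lemma star_qp : star qp = 1 + qi := by
  have star_qi : star qi = -qi := Quaternion.star_eq_neg.mpr rfl
  simp [qp, star_qi]

lemma neg_star_qp_sub_qp : -star qp - qp = -2 := by
  rw [star_qp, qp, ← one_add_one_eq_two]
  abel

lemma qp_mul_star_qp : qp * star qp = 2 := by
  rw [star_qp, qp, ← one_add_one_eq_two]
  noncomm_ring [qi_mul_qi]

lemma star_qp_mul_qp : star qp * qp = 2 := by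
  rw [Quaternion.star_mul_self, ← Quaternion.self_mul_star, qp_mul_star_qp]

lemma qp_mul_qi : qp * qi = star qp := by
  rw [star_qp, qp]
  noncomm_ring [qi_mul_qi]

lemma qi_mul_qp : qi * qp = star qp := by
  rw [star_qp, qp]
  noncomm_ring [qi_mul_qi]

lemma qp_ne_zero : qp ≠ 0 := by
  have : CharZero Quat := algebraRat.charZero Quat
  exact left_ne_zero_of_mul (qp_mul_star_qp.trans_ne two_ne_zero)

end QuaternionArithmetic

section HermitianForm

lemma star_ip3 (x y : V3) : star (ip3 x y) = ip3 y x := by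
  simp only [ip3, star_add, star_sub, star_neg, star_sum, star_mul, star_star, mul_assoc]
  abel

lemma ip3_add_right (x y z : V3) : ip3 x (y + z) = ip3 x y + ip3 x z := by
  simp only [ip3, Fin.sum_univ_three, Prod.fst_add, Prod.snd_add, Pi.add_apply, mul_add]
  abel

lemma ip3_sub_right (x y z : V3) : ip3 x (y - z) = ip3 x y - ip3 x z :=
  map_sub (AddMonoidHom.mk' (ip3 x) (ip3_add_right x)) y z

lemma ip3_sum_right {ι : Type*} (x : V3) (S : Finset ι) (y : ι → V3) :
    ip3 x (∑ i ∈ S, y i) = ∑ i ∈ S, ip3 x (y i) :=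
  map_sum (AddMonoidHom.mk' (ip3 x) (ip3_add_right x)) y S

lemma ip3_rmul3_right (x y : V3) (q : Quat) : ip3 x (rmul3 y q) = ip3 x y * q := by
  simp only [ip3, rmul3, add_mul, sub_mul, neg_mul, Finset.sum_mul, mul_assoc]

end HermitianForm

section PairingsWithRoots

lemma ip3_rootA (y : V3) : ip3 rootA y = star qp * y.2.2 - qp * y.2.1 := by
  simp [ip3, rootA, sub_eq_add_neg]

lemma ip3_rootC (s : Fin 3) (y : V3) : ip3 (rootC s) y = (y.1 s).2 - (y.1 s).1 := by
  fin_cases s <;> simp [ip3, rootC, Fin.sum_univ_three, neg_add_eq_sub]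

lemma ip3_rootE (s : Fin 3) (y : V3) :
    ip3 (rootE s) y = -(∑ t with t ≠ s, ((y.1 t).1 + (y.1 t).2)) - qp * (y.2.1 + y.2.2) := by
  have hμ : star (-qi) * star qp = -qp := by
    rw [← star_mul, mul_neg, qp_mul_qi, star_neg, star_star]
  simp only [ip3, rootE, hμ, Finset.sum_filter, Fin.sum_univ_three]
  fin_cases s <;> simp [mul_add] <;> abel

lemma ip3_rootF (y : V3) :
    ip3 rootF y = -(star qp * ∑ t, (y.1 t).2) - 2 * (y.2.1 + y.2.2) := by
  simp [ip3, rootF, qi_mul_qp, qp_mul_star_qp, star_qp_mul_qp, Finset.mul_sum, mul_add,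
    sub_eq_add_neg, add_assoc]

lemma ip3_rootB (s : Fin 3) (y : V3) :
    ip3 (rootB s) y = -(star qp * ((y.1 s).2 + y.2.2)) := by
  simp [ip3, rootB, apply_ite, mul_add, add_comm]

lemma ip3_rootD (s : Fin 3) (y : V3) : ip3 (rootD s) y = star qp * (y.1 s).1 := by
  simp [ip3, rootD, apply_ite]

end PairingsWithRoots

section GramMatrix

/-- The lines of `D` through a given point, as indices into `Ln`. The seven sets
form a Fano plane. -/
def linesThrough : Fin 7 → Finset (Fin 7) :=
  ![{1, 2, 3}, {0, 1, 4}, {0, 2, 5}, {0, 3, 6}, {1, 5, 6}, {2, 4, 6}, {3, 4, 5}]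

lemma card_linesThrough_inter (t t' : Fin 7) :
    #(linesThrough t ∩ linesThrough t') = if t = t' then 3 else 1 := by
  decide +revert

lemma ip3_Pt_Pt (t t' : Fin 7) : ip3 (Pt t) (Pt t') = if t = t' then -2 else 0 := by
  have e_sum : -qi - 1 = -star qp := by rw [star_qp]; abel
  fin_cases t <;> fin_cases t' <;>
    simp only [Pt, Fin.zero_eta, Fin.mk_one, Fin.reduceFinMk, Matrix.cons_val, ip3_rootA,
      ip3_rootC, ip3_rootE, Finset.sum_filter, Fin.sum_univ_three]
  all_goals
    simp [rootA, rootC, rootE, ← sub_eq_add_neg, e_sum, neg_star_qp_sub_qp, qp_mul_qi,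
      qp_mul_star_qp]
  all_goals norm_num

lemma ip3_Ln_Ln (s s' : Fin 7) : ip3 (Ln s) (Ln s') = if s = s' then -2 else 0 := by
  fin_cases s <;> fin_cases s' <;>
    simp only [Ln, Fin.zero_eta, Fin.mk_one, Fin.reduceFinMk, Matrix.cons_val, ip3_rootF,
      ip3_rootB, ip3_rootD, Fin.sum_univ_three]
  all_goals
    simp [rootF, rootB, rootD, ← sub_eq_add_neg, neg_star_qp_sub_qp, mul_add, star_qp_mul_qp,
      qi_mul_qp]
  all_goals norm_num

lemma ip3_Pt_Ln (t s : Fin 7) :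
    ip3 (Pt t) (Ln s) = if s ∈ linesThrough t then qp else 0 := by
  fin_cases t <;> fin_cases s <;>
    simp only [Pt, Ln, Fin.zero_eta, Fin.mk_one, Fin.reduceFinMk, Matrix.cons_val, ip3_rootA,
      ip3_rootC, ip3_rootE, Finset.sum_filter, Fin.sum_univ_three]
  all_goals
    simp [linesThrough, rootF, rootB, rootD, ← sub_eq_add_neg, neg_star_qp_sub_qp,
      star_qp_mul_qp, qi_mul_qp, qp_mul_star_qp, mul_two]

end GramMatrix

section Separation

lemma eq_zero_of_ip3_roots_eq_zero {v : V3} {r : Fin 3} (hA : ip3 rootA v = 0)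
    (hB : ip3 (rootB r) v = 0) (hC : ∀ s, ip3 (rootC s) v = 0)
    (hD : ∀ s, ip3 (rootD s) v = 0) : v = 0 := by
  have star_qp_ne_zero : star qp ≠ 0 := star_ne_zero.mpr qp_ne_zero
  have fst_eq_zero (s : Fin 3) : (v.1 s).1 = 0 := by
    simpa [ip3_rootD, star_qp_ne_zero] using hD s
  have snd_eq_zero (s : Fin 3) : (v.1 s).2 = 0 := by
    simpa [ip3_rootC, fst_eq_zero] using hC s
  have ν_eq_zero : v.2.2 = 0 := by
    simpa [ip3_rootB, snd_eq_zero, star_qp_ne_zero] using hB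
  have μ_eq_zero : v.2.1 = 0 := by
    simpa [ip3_rootA, ν_eq_zero, qp_ne_zero] using hA
  exact Prod.ext (funext fun s => Prod.ext (fst_eq_zero s) (snd_eq_zero s))
    (Prod.ext μ_eq_zero ν_eq_zero)

lemma eq_of_ip3_Pt_eq_of_ip3_Ln_eq {v w : V3} (hPt : ∀ t, ip3 (Pt t) v = ip3 (Pt t) w)
    (hLn : ∀ s, ip3 (Ln s) v = ip3 (Ln s) w) : v = w := by
  have hPt_sub (t : Fin 7) : ip3 (Pt t) (v - w) = 0 := by
    rw [ip3_sub_right, hPt, sub_self]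
  have hLn_sub (s : Fin 7) : ip3 (Ln s) (v - w) = 0 := by
    rw [ip3_sub_right, hLn, sub_self]
  have hC (s : Fin 3) : ip3 (rootC s) (v - w) = 0 := by
    fin_cases s
    exacts [hPt_sub 1, hPt_sub 2, hPt_sub 3]
  have hD (s : Fin 3) : ip3 (rootD s) (v - w) = 0 := by
    fin_cases s
    exacts [hLn_sub 4, hLn_sub 5, hLn_sub 6]
  exact sub_eq_zero.mp (eq_zero_of_ip3_roots_eq_zero (hPt_sub 0) (hLn_sub 1) hC hD)

end Separation

section PairingsWithW

lemma wLof_eq_sum_linesThrough (t : Fin 7) :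
    wLof t = rmul3 (Pt t) qp + ∑ s ∈ linesThrough t, Ln s := by
  simp [wLof, ip3_Pt_Ln, qp_ne_zero.symm, Finset.sum_ite_mem]

lemma ip3_wLof (v : V3) (t : Fin 7) :
    ip3 v (wLof t) = ip3 v (Pt t) * qp + ∑ s ∈ linesThrough t, ip3 v (Ln s) := by
  rw [wLof_eq_sum_linesThrough, ip3_add_right, ip3_rmul3_right, ip3_sum_right]

lemma ip3_Pt_wLof (t t' : Fin 7) : ip3 (Pt t) (wLof t') = qp := by
  have sum_lines : ∑ s ∈ linesThrough t', ip3 (Pt t) (Ln s)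
      = (if t = t' then 3 else 1) * qp := by
    simp_rw [ip3_Pt_Ln, ← Finset.sum_filter, Finset.filter_mem_eq_inter, Finset.sum_const,
      card_linesThrough_inter]
    simp [eq_comm]
  rw [ip3_wLof, ip3_Pt_Pt, sum_lines, ← add_mul]
  split_ifs <;> norm_num

lemma ip3_Ln_wLof (s t : Fin 7) : ip3 (Ln s) (wLof t) = 0 := by
  rw [ip3_wLof, ← star_ip3, ip3_Pt_Ln]
  by_cases hs : s ∈ linesThrough t <;> simp [ip3_Ln_Ln, hs, star_qp_mul_qp]

lemma ip3_wLof_wLof (t : Fin 7) : ip3 (wLof t) (wLof t) = 2 := by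
  rw [ip3_wLof, ← star_ip3, ip3_Pt_wLof, star_qp_mul_qp, Finset.sum_eq_zero, add_zero]
  intro s _
  rw [← star_ip3, ip3_Ln_wLof, star_zero]

end PairingsWithW

/-- The vector `w_L = x p + Σ_{l incident to x} l` does not depend on
the choice of the point `x`, and has norm `2`. -/
theorem wL_well_defined_norm_two :
    (∀ t t' : Fin 7, wLof t = wLof t') ∧
    (∀ t : Fin 7, ip3 (wLof t) (wLof t) = 2) := by
  refine ⟨fun t t' => eq_of_ip3_Pt_eq_of_ip3_Ln_eq (fun u => ?_) (fun s => ?_), ip3_wLof_wLof⟩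
  · rw [ip3_Pt_wLof, ip3_Pt_wLof]
  · rw [ip3_Ln_wLof, ip3_Ln_wLof]
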